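/- For every unit spinor φ ∈ Δ there exists a unique linear map J_φ : ℝ^6 → ℝ^6 such that j(x·φ) = (J_φ x)·φ for all x ∈ ℝ^6; moreover J_φ∘J_φ = −Id_{ℝ^6} and J_φ is orthogonal: ⟨J_φ x, J_φ y⟩ = ⟨x, y⟩ for all x, y ∈ ℝ^6. -/

import Mathlib

open RealInnerProductSpace

noncomputable section

/-- The spin representation space Δ = ℝ^8. -/
abbrev Δ : Type := EuclideanSpace ℝ (Fin 8)

/-- The standard skew endomorphism E_{ij} of ℝ^8: u_i ↦ u_j, u_j ↦ -u_i, others ↦ 0. -/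
def E (i j : Fin 8) : Δ →ₗ[ℝ] Δ where
  toFun v := v i • EuclideanSpace.single j (1 : ℝ) - v j • EuclideanSpace.single i (1 : ℝ)
  map_add' x y := by
    simp only [PiLp.add_apply, add_smul]
    module
  map_smul' c x := by
    simp only [PiLp.smul_apply, smul_eq_mul, RingHom.id_apply, mul_smul]
    module

/-- The seven Clifford endomorphisms e_1, …, e_7 (indexed 0,…,6). -/
def cliff : Fin 7 → (Δ →ₗ[ℝ] Δ) :=
  ![  E 0 7 + E 1 6 - E 2 5 - E 3 4,
    - E 0 6 + E 1 7 + E 2 4 - E 3 5,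
    - E 0 5 + E 1 4 - E 2 7 + E 3 6,
    - E 0 4 - E 1 5 - E 2 6 - E 3 7,
    - E 0 2 - E 1 3 + E 4 6 + E 5 7,
      E 0 3 - E 1 2 - E 4 7 + E 5 6,
      E 0 1 - E 2 3 - E 4 5 + E 6 7]

/-- j = e_1 ∘ e_2 ∘ e_3 ∘ e_4 ∘ e_5 ∘ e_6. -/
def jmap : Δ →ₗ[ℝ] Δ :=
  cliff 0 ∘ₗ cliff 1 ∘ₗ cliff 2 ∘ₗ cliff 3 ∘ₗ cliff 4 ∘ₗ cliff 5

/-- Clifford multiplication of a vector x ∈ ℝ^6 on a spinor. -/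
def cm6 (x : EuclideanSpace ℝ (Fin 6)) (φ : Δ) : Δ :=
  ∑ i : Fin 6, x i • cliff i.castSucc φ

/-- Clifford multiplication of a vector x ∈ ℝ^7 on a spinor. -/
def cm7 (x : EuclideanSpace ℝ (Fin 7)) (φ : Δ) : Δ :=
  ∑ i : Fin 7, x i • cliff i φ


/-!
Fix a spinor `φ ≠ 0`. Skewness and the Clifford relations make `x ↦ x·φ` a similarity with factor
`‖φ‖`, hence injective. Since `j` is skew and anticommutes with Clifford multiplication, the image
of `x ↦ x·φ` is orthogonal to the plane spanned by `φ` and `j φ`, and by a dimension count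
(`8 = 6 + 2`) it is the whole orthogonal complement. The plane is `j`-invariant and `j` is
orthogonal, so `j` preserves the image, and pulling `j` back along `x ↦ x·φ` gives `J_φ`.

The required properties of `j` follow from the identity `j = -e₇` and the Clifford relations for
`e₁, …, e₇`. Both are sign computations: each `eᵢ` permutes the coordinates up to sign, and for
coordinates numbered from `0` to `7` the permutation is the bitwise exclusive or with a constant.
-/

open Module

section InnerProduct

variable {S : Type*} [NormedAddCommGroup S] [InnerProductSpace ℝ S]

theorem isSkewAdjoint_innerₗ_iff {f : S →ₗ[ℝ] S} :
    (innerₗ S).IsSkewAdjoint f ↔ ∀ φ ψ : S, ⟪f φ, ψ⟫ = -⟪φ, f ψ⟫ := by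
  simp [LinearMap.IsSkewAdjoint, LinearMap.IsAdjointPair]

theorem inner_self_apply_eq_zero_of_isSkewAdjoint {f : S →ₗ[ℝ] S}
    (hf : (innerₗ S).IsSkewAdjoint f) (φ : S) : ⟪φ, f φ⟫ = 0 := by
  have hskew : ⟪f φ, φ⟫ = -⟪φ, f φ⟫ := isSkewAdjoint_innerₗ_iff.mp hf φ φ
  rw [real_inner_comm] at hskew
  linarith

theorem mem_orthogonal_span_pair_iff {a b ψ : S} :
    ψ ∈ (Submodule.span ℝ {a, b})ᗮ ↔ ⟪a, ψ⟫ = 0 ∧ ⟪b, ψ⟫ = 0 := by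
  rw [Submodule.span_insert, ← Submodule.inf_orthogonal, Submodule.mem_inf,
    Submodule.mem_orthogonal_singleton_iff_inner_right,
    Submodule.mem_orthogonal_singleton_iff_inner_right]

theorem finrank_span_pair_of_inner_eq_zero {a b : S} (ha : a ≠ 0) (hb : b ≠ 0)
    (hab : ⟪a, b⟫ = 0) : finrank ℝ (Submodule.span ℝ {a, b}) = 2 := by
  have hindep : LinearIndependent ℝ ![a, b] := by
    refine linearIndependent_of_ne_zero_of_inner_eq_zero (𝕜 := ℝ) (fun i => ?_) fun i k hik => ?_
    · fin_cases i <;> simpa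
    · fin_cases i <;> fin_cases k <;> simp_all [real_inner_comm]
  have hcard := finrank_span_eq_card hindep
  rwa [Matrix.range_cons_cons_empty, Fintype.card_fin] at hcard

end InnerProduct

theorem existsUnique_intertwining_of_range_invariant {K V S : Type*} [Field K] [AddCommGroup V]
    [Module K V] [AddCommGroup S] [Module K S] {L : V →ₗ[K] S} (hL : Function.Injective L)
    {f : S →ₗ[K] S} (hf : ∀ x, f (L x) ∈ LinearMap.range L) :
    ∃! J : V →ₗ[K] V, ∀ x, f (L x) = L (J x) := by
  obtain ⟨g, hg⟩ := L.exists_leftInverse_of_injective (LinearMap.ker_eq_bot.mpr hL)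
  have hgL (x : V) : g (L x) = x := LinearMap.congr_fun hg x
  refine ⟨g ∘ₗ f ∘ₗ L, fun x => ?_, fun J hJ => LinearMap.ext fun x => ?_⟩
  · obtain ⟨y, hy⟩ := hf x
    simp [← hy, hgL]
  · simp [hJ, hgL]

section CliffordMultiplication

variable {V S : Type*} [NormedAddCommGroup V] [InnerProductSpace ℝ V]
  [NormedAddCommGroup S] [InnerProductSpace ℝ S]

/-- Clifford multiplication of a Euclidean space `V` on a Euclidean space `S` of spinors: vectors
act by skew-adjoint maps, with the sign convention `x·x·φ = -‖x‖² φ`, here in polarized form. -/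
structure IsCliffordMul (c : V →ₗ[ℝ] S →ₗ[ℝ] S) : Prop where
  isSkewAdjoint : ∀ x, (innerₗ S).IsSkewAdjoint (c x)
  apply_apply_add_swap : ∀ x y φ, c x (c y φ) + c y (c x φ) = (-2 * ⟪x, y⟫) • φ

/-- An orthogonal complex structure: a map with square `-1` for which orthogonality is imposed in
the equivalent form of skew-adjointness. -/
structure IsOrthogonalComplexStructure (j : S →ₗ[ℝ] S) : Prop where
  isSkewAdjoint : (innerₗ S).IsSkewAdjoint j
  apply_apply : ∀ φ, j (j φ) = -φ

/-- An orthogonal complex structure `j` on the spinors that anticommutes with Clifford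
multiplication `c`, such as the volume element in dimension six. -/
structure IsAnticommutingComplexStructure (c : V →ₗ[ℝ] S →ₗ[ℝ] S) (j : S →ₗ[ℝ] S) : Prop
    extends IsOrthogonalComplexStructure j where
  anticomm : ∀ x φ, j (c x φ) = -c x (j φ)

variable {c : V →ₗ[ℝ] S →ₗ[ℝ] S} {j : S →ₗ[ℝ] S} {φ : S}

theorem IsCliffordMul.inner_apply_apply (hc : IsCliffordMul c) (x y : V) (φ : S) :
    ⟪c x φ, c y φ⟫ = ⟪x, y⟫ * ⟪φ, φ⟫ := by
  have hskew (x y : V) : ⟪c x φ, c y φ⟫ = -⟪φ, c x (c y φ)⟫ :=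
    isSkewAdjoint_innerₗ_iff.mp (hc.isSkewAdjoint x) φ (c y φ)
  have hrel : ⟪φ, c x (c y φ)⟫ + ⟪φ, c y (c x φ)⟫ = -2 * ⟪x, y⟫ * ⟪φ, φ⟫ := by
    rw [← inner_add_right, hc.apply_apply_add_swap, real_inner_smul_right]
  linarith [hskew x y, hskew y x, real_inner_comm (c x φ) (c y φ)]

theorem IsCliffordMul.injective_apply (hc : IsCliffordMul c) (hφ : φ ≠ 0) :
    Function.Injective (c.flip φ) := by
  refine (injective_iff_map_eq_zero _).mpr fun x hx => ?_
  have hnorm : ⟪x, x⟫ * ⟪φ, φ⟫ = 0 := by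
    rw [← hc.inner_apply_apply, ← c.flip_apply, hx, inner_zero_left]
  exact inner_self_eq_zero.mp
    ((mul_eq_zero.mp hnorm).resolve_right (inner_self_ne_zero.mpr hφ))

namespace IsOrthogonalComplexStructure

theorem inner_apply_apply (hj : IsOrthogonalComplexStructure j) (φ ψ : S) :
    ⟪j φ, j ψ⟫ = ⟪φ, ψ⟫ := by
  rw [isSkewAdjoint_innerₗ_iff.mp hj.isSkewAdjoint, hj.apply_apply, inner_neg_right, neg_neg]

theorem apply_ne_zero (hj : IsOrthogonalComplexStructure j) (hφ : φ ≠ 0) : j φ ≠ 0 := by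
  rwa [← inner_self_ne_zero (𝕜 := ℝ), hj.inner_apply_apply, inner_self_ne_zero]

theorem apply_mem_orthogonal (hj : IsOrthogonalComplexStructure j) {ψ : S}
    (hψ : ψ ∈ (Submodule.span ℝ {φ, j φ})ᗮ) : j ψ ∈ (Submodule.span ℝ {φ, j φ})ᗮ := by
  obtain ⟨hφψ, hjφψ⟩ := mem_orthogonal_span_pair_iff.mp hψ
  refine mem_orthogonal_span_pair_iff.mpr ⟨?_, by rwa [hj.inner_apply_apply]⟩
  rw [← neg_eq_zero, ← isSkewAdjoint_innerₗ_iff.mp hj.isSkewAdjoint, hjφψ]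

theorem comp_self_of_intertwining (hj : IsOrthogonalComplexStructure j)
    (hc : IsCliffordMul c) (hφ : φ ≠ 0) {J : V →ₗ[ℝ] V} (hJ : ∀ x, j (c x φ) = c (J x) φ) :
    J ∘ₗ J = -LinearMap.id := by
  refine LinearMap.ext fun x => hc.injective_apply hφ ?_
  calc c (J (J x)) φ = j (j (c x φ)) := by rw [hJ, hJ]
    _ = -c x φ := hj.apply_apply _
    _ = c (-x) φ := by rw [map_neg, LinearMap.neg_apply]

theorem inner_apply_apply_of_intertwining (hj : IsOrthogonalComplexStructure j)
    (hc : IsCliffordMul c) (hφ : φ ≠ 0) {J : V →ₗ[ℝ] V} (hJ : ∀ x, j (c x φ) = c (J x) φ)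
    (x y : V) : ⟪J x, J y⟫ = ⟪x, y⟫ := by
  refine mul_right_cancel₀ (inner_self_ne_zero (𝕜 := ℝ) |>.mpr hφ) ?_
  rw [← hc.inner_apply_apply, ← hJ, ← hJ, hj.inner_apply_apply, hc.inner_apply_apply]

end IsOrthogonalComplexStructure

namespace IsAnticommutingComplexStructure

theorem inner_apply_cliffordMul_eq_zero (hj : IsAnticommutingComplexStructure c j)
    (hc : IsCliffordMul c) (x : V) (φ : S) : ⟪j φ, c x φ⟫ = 0 := by
  have hneg : ⟪j φ, c x φ⟫ = -⟪j φ, c x φ⟫ := calc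
    ⟪j φ, c x φ⟫ = ⟪φ, c x (j φ)⟫ := by
      rw [isSkewAdjoint_innerₗ_iff.mp hj.isSkewAdjoint, hj.anticomm, inner_neg_right, neg_neg]
    _ = -⟪c x φ, j φ⟫ := by
      rw [isSkewAdjoint_innerₗ_iff.mp (hc.isSkewAdjoint x), neg_neg]
    _ = -⟪j φ, c x φ⟫ := by rw [real_inner_comm]
  linarith

theorem range_cliffordMul_eq_orthogonal (hj : IsAnticommutingComplexStructure c j)
    (hc : IsCliffordMul c) (hdim : finrank ℝ S = finrank ℝ V + 2) (hφ : φ ≠ 0) :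
    LinearMap.range (c.flip φ) = (Submodule.span ℝ {φ, j φ})ᗮ := by
  have : FiniteDimensional ℝ S := .of_finrank_pos (by lia)
  have hle : LinearMap.range (c.flip φ) ≤ (Submodule.span ℝ {φ, j φ})ᗮ := by
    rintro _ ⟨x, rfl⟩
    exact mem_orthogonal_span_pair_iff.mpr
      ⟨inner_self_apply_eq_zero_of_isSkewAdjoint (hc.isSkewAdjoint x) φ,
        hj.inner_apply_cliffordMul_eq_zero hc x φ⟩
  have hplane : finrank ℝ (Submodule.span ℝ {φ, j φ}) = 2 :=
    finrank_span_pair_of_inner_eq_zero hφ (hj.apply_ne_zero hφ)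
      (inner_self_apply_eq_zero_of_isSkewAdjoint hj.isSkewAdjoint φ)
  have hrange : finrank ℝ (LinearMap.range (c.flip φ)) = finrank ℝ V :=
    LinearMap.finrank_range_of_inj (hc.injective_apply hφ)
  have hsum := (Submodule.span ℝ {φ, j φ}).finrank_add_finrank_orthogonal
  exact Submodule.eq_of_le_of_finrank_eq hle (by lia)

theorem apply_cliffordMul_mem_range (hj : IsAnticommutingComplexStructure c j)
    (hc : IsCliffordMul c) (hdim : finrank ℝ S = finrank ℝ V + 2) (hφ : φ ≠ 0) (x : V) :
    j (c x φ) ∈ LinearMap.range (c.flip φ) := by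
  have hx : c x φ ∈ LinearMap.range (c.flip φ) := ⟨x, rfl⟩
  rw [hj.range_cliffordMul_eq_orthogonal hc hdim hφ] at hx ⊢
  exact hj.apply_mem_orthogonal hx

end IsAnticommutingComplexStructure

theorem exists_unique_Jphi_general (hc : IsCliffordMul c)
    (hj : IsAnticommutingComplexStructure c j) (hdim : finrank ℝ S = finrank ℝ V + 2)
    (hφ : φ ≠ 0) :
    (∃! J : V →ₗ[ℝ] V, ∀ x, j (c x φ) = c (J x) φ) ∧
    (∀ J : V →ₗ[ℝ] V, (∀ x, j (c x φ) = c (J x) φ) →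
      J ∘ₗ J = -LinearMap.id ∧ ∀ x y, ⟪J x, J y⟫ = ⟪x, y⟫) :=
  ⟨existsUnique_intertwining_of_range_invariant (hc.injective_apply hφ)
      (hj.apply_cliffordMul_mem_range hc hdim hφ),
    fun _ hJ => ⟨hj.comp_self_of_intertwining hc hφ hJ,
      hj.inner_apply_apply_of_intertwining hc hφ hJ⟩⟩

end CliffordMultiplication

section CliffordGenerators

variable {ι S : Type*} [Fintype ι] [NormedAddCommGroup S] [InnerProductSpace ℝ S]

/-- The bilinear multiplication `x·φ = ∑ i, xᵢ eᵢ(φ)` in which the `i`-th standard basis vector acts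
by `e i`. -/
def cliffordMulOfGenerators (e : ι → S →ₗ[ℝ] S) : EuclideanSpace ℝ ι →ₗ[ℝ] S →ₗ[ℝ] S :=
  LinearMap.mk₂ ℝ (fun x φ => ∑ i, x i • e i φ)
    (fun x y φ => by simp [add_smul, Finset.sum_add_distrib])
    (fun a x φ => by simp [mul_smul, Finset.smul_sum])
    (fun x φ ψ => by simp [Finset.sum_add_distrib])
    (fun a x φ => by simp [Finset.smul_sum, smul_comm a])

theorem cliffordMulOfGenerators_apply (e : ι → S →ₗ[ℝ] S) (x : EuclideanSpace ℝ ι) (φ : S) :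
    cliffordMulOfGenerators e x φ = ∑ i, x i • e i φ :=
  rfl

variable {e : ι → S →ₗ[ℝ] S}

theorem isCliffordMul_cliffordMulOfGenerators (hskew : ∀ i, (innerₗ S).IsSkewAdjoint (e i))
    (hsq : ∀ i φ, e i (e i φ) = -φ) (hanti : ∀ i k, i ≠ k → ∀ φ, e i (e k φ) = -e k (e i φ)) :
    IsCliffordMul (cliffordMulOfGenerators e) where
  isSkewAdjoint x := isSkewAdjoint_innerₗ_iff.mpr fun φ ψ => by
    simp [cliffordMulOfGenerators_apply, sum_inner, inner_sum, real_inner_smul_left,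
      real_inner_smul_right, isSkewAdjoint_innerₗ_iff.mp (hskew _)]
  apply_apply_add_swap x y φ := by
    classical
    have hrel (i k : ι) : e i (e k φ) + e k (e i φ) = if i = k then (-2 : ℝ) • φ else 0 := by
      split_ifs with hik
      · subst hik
        rw [hsq]
        module
      · rw [hanti i k hik, neg_add_cancel]
    have hexpand (x y : EuclideanSpace ℝ ι) :
        cliffordMulOfGenerators e x (cliffordMulOfGenerators e y φ) =
          ∑ i, ∑ k, (x i * y k) • e i (e k φ) := by
      rw [cliffordMulOfGenerators_apply e x, cliffordMulOfGenerators_apply e y]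
      simp only [map_sum, map_smul, Finset.smul_sum, smul_smul]
    calc
      cliffordMulOfGenerators e x (cliffordMulOfGenerators e y φ) +
            cliffordMulOfGenerators e y (cliffordMulOfGenerators e x φ)
          = ∑ i, ∑ k, (x i * y k) • (e i (e k φ) + e k (e i φ)) := by
        rw [hexpand, hexpand y x, Finset.sum_comm (f := fun i k => (y i * x k) • e i (e k φ))]
        simp only [smul_add, Finset.sum_add_distrib, mul_comm]
      _ = (-2 * ⟪x, y⟫) • φ := by
        simp [hrel, PiLp.inner_apply, Finset.mul_sum, Finset.sum_smul, smul_smul, mul_comm]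

theorem isAnticommutingComplexStructure_cliffordMulOfGenerators {j : S →ₗ[ℝ] S}
    (hskew : (innerₗ S).IsSkewAdjoint j) (hsq : ∀ φ, j (j φ) = -φ)
    (hanti : ∀ i φ, j (e i φ) = -e i (j φ)) :
    IsAnticommutingComplexStructure (cliffordMulOfGenerators e) j where
  isSkewAdjoint := hskew
  apply_apply := hsq
  anticomm x φ := by simp [cliffordMulOfGenerators_apply, hanti]

end CliffordGenerators

section SpinorCoordinates

theorem E_apply (i j k : Fin 8) (φ : Δ) :
    E i j φ k = (if k = j then φ i else 0) - (if k = i then φ j else 0) := by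
  simp [E]

/-- The constant `m` such that `cliff i` maps the `k`-th coordinate line to the `k ^^^ m`-th one. -/
def cliffMask : Fin 7 → Fin 8 := ![7, 6, 5, 4, 2, 3, 1]

/-- The sign in front of the coordinate of `φ` that becomes the `k`-th coordinate of `cliff i φ`,
as an integer so that identities between signs are decidable. -/
def cliffSign : Fin 7 → Fin 8 → ℤ :=
  ![![-1, -1, 1, 1, -1, -1, 1, 1],
    ![1, -1, -1, 1, 1, -1, -1, 1],
    ![1, -1, 1, -1, 1, -1, 1, -1],
    ![1, 1, 1, 1, -1, -1, -1, -1],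
    ![1, 1, -1, -1, -1, -1, 1, 1],
    ![-1, 1, -1, 1, 1, -1, 1, -1],
    ![-1, 1, 1, -1, 1, -1, -1, 1]]

theorem cliff_apply (i : Fin 7) (φ : Δ) (k : Fin 8) :
    cliff i φ k = cliffSign i k * φ (k ^^^ cliffMask i) := by
  fin_cases i <;> fin_cases k <;> simp [cliff, E_apply, cliffSign, cliffMask]

theorem xor_cliffMask_xor_cliffMask :
    ∀ (i : Fin 7) (k : Fin 8), k ^^^ cliffMask i ^^^ cliffMask i = k := by
  decide

theorem isSkewAdjoint_cliff (i : Fin 7) : (innerₗ Δ).IsSkewAdjoint (cliff i) := by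
  have hsign : ∀ i k, cliffSign i (k ^^^ cliffMask i) = -cliffSign i k := by decide
  refine isSkewAdjoint_innerₗ_iff.mpr fun φ ψ => ?_
  rw [PiLp.inner_apply, PiLp.inner_apply, ← Finset.sum_neg_distrib]
  let reindex : Equiv.Perm (Fin 8) :=
    Function.Involutive.toPerm (· ^^^ cliffMask i) (xor_cliffMask_xor_cliffMask i)
  have hreindex (k : Fin 8) : reindex k = k ^^^ cliffMask i := rfl
  refine Fintype.sum_equiv reindex _ _ fun k => ?_
  simp only [hreindex, cliff_apply, hsign, xor_cliffMask_xor_cliffMask, RCLike.inner_apply,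
    conj_trivial]
  push_cast
  ring

theorem cliff_cliff_self (i : Fin 7) (φ : Δ) : cliff i (cliff i φ) = -φ := by
  have hsign : ∀ i k, cliffSign i k * cliffSign i (k ^^^ cliffMask i) = -1 := by decide
  ext k
  rw [cliff_apply, cliff_apply, xor_cliffMask_xor_cliffMask, ← mul_assoc, ← Int.cast_mul, hsign]
  simp

theorem cliff_anticomm {i j : Fin 7} (hij : i ≠ j) (φ : Δ) :
    cliff i (cliff j φ) = -cliff j (cliff i φ) := by
  have hmask : ∀ i j k, k ^^^ cliffMask i ^^^ cliffMask j = k ^^^ cliffMask j ^^^ cliffMask i := by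
    decide
  have hsign : ∀ i j k, i ≠ j → cliffSign i k * cliffSign j (k ^^^ cliffMask i) =
      -(cliffSign j k * cliffSign i (k ^^^ cliffMask j)) := by
    decide
  ext k
  rw [PiLp.neg_apply]
  simp only [cliff_apply]
  rw [hmask, ← mul_assoc, ← mul_assoc, ← Int.cast_mul, ← Int.cast_mul, hsign i j k hij]
  push_cast
  ring

theorem jmap_eq_neg_cliff_six : jmap = -cliff 6 := by
  ext φ k
  simp only [jmap, LinearMap.comp_apply, LinearMap.neg_apply, PiLp.neg_apply, cliff_apply]
  fin_cases k <;> simp [cliffSign, cliffMask]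

end SpinorCoordinates

/-- `cm6` as a bilinear map. -/
def cm6Bilin : EuclideanSpace ℝ (Fin 6) →ₗ[ℝ] Δ →ₗ[ℝ] Δ :=
  cliffordMulOfGenerators fun i => cliff i.castSucc

theorem cm6Bilin_apply (x : EuclideanSpace ℝ (Fin 6)) (φ : Δ) : cm6Bilin x φ = cm6 x φ :=
  rfl

theorem isCliffordMul_cm6Bilin : IsCliffordMul cm6Bilin :=
  isCliffordMul_cliffordMulOfGenerators (fun i => isSkewAdjoint_cliff i.castSucc)
    (fun i => cliff_cliff_self i.castSucc)
    fun _ _ hik => cliff_anticomm ((Fin.castSucc_injective 6).ne hik)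

theorem isAnticommutingComplexStructure_jmap :
    IsAnticommutingComplexStructure cm6Bilin jmap := by
  rw [jmap_eq_neg_cliff_six]
  refine isAnticommutingComplexStructure_cliffordMulOfGenerators ?_ (fun φ => ?_) fun i φ => ?_
  · rw [← LinearMap.mem_skewAdjointSubmodule]
    exact neg_mem ((LinearMap.mem_skewAdjointSubmodule _).mpr (isSkewAdjoint_cliff 6))
  · simp [cliff_cliff_self]
  · have hanti : cliff 6 (cliff i.castSucc φ) = -cliff i.castSucc (cliff 6 φ) :=
      cliff_anticomm (Fin.castSucc_lt_last i).ne' φ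
    simp [hanti]

/-- For every unit spinor φ there exists a unique linear map J_φ : ℝ^6 → ℝ^6 with
j(x·φ) = (J_φ x)·φ for all x; moreover J_φ∘J_φ = -Id and J_φ is orthogonal. -/
theorem exists_unique_Jphi (φ : Δ) (hφ : ⟪φ, φ⟫ = 1) :
    (∃! J : EuclideanSpace ℝ (Fin 6) →ₗ[ℝ] EuclideanSpace ℝ (Fin 6),
      ∀ x : EuclideanSpace ℝ (Fin 6), jmap (cm6 x φ) = cm6 (J x) φ) ∧
    (∀ J : EuclideanSpace ℝ (Fin 6) →ₗ[ℝ] EuclideanSpace ℝ (Fin 6),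
      (∀ x : EuclideanSpace ℝ (Fin 6), jmap (cm6 x φ) = cm6 (J x) φ) →
        J ∘ₗ J = -LinearMap.id ∧
        ∀ x y : EuclideanSpace ℝ (Fin 6), ⟪J x, J y⟫ = ⟪x, y⟫) := by
  have hφ₀ : φ ≠ 0 := inner_self_ne_zero (𝕜 := ℝ).mp (hφ ▸ one_ne_zero)
  simpa only [cm6Bilin_apply] using exists_unique_Jphi_general isCliffordMul_cm6Bilin
    isAnticommutingComplexStructure_jmap (by simp) hφ₀

end
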